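/- arXiv:math/0410052 — 2 statements merged into one kernel-verified Lean document; each statement's English description precedes it below -/
import Mathlib

section
/- Let S be a Polish space, c : S × S → [0,∞) satisfy condition (★), (Ω, 𝒜, P) a probability space, ℳ a sub-σ-algebra of 𝒜, and X an S-valued random variable with ∫ c(x, x₀) dP_X(x) < ∞ for some x₀ ∈ S. Then τ_c(ℳ, X) = sup_{f ∈ Λ} [ ∫_Ω f(ω, X(ω)) dP(ω) − ∫_Ω ( ∫_S f(ω, x) dP_X(x) ) dP(ω) ], where Λ is the set of maps f : Ω × S → ℝ, measurable for ℳ ⊗ B(S), such that f(ω, ·) ∈ Lip_c for every ω ∈ Ω. -/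
open MeasureTheory ProbabilityTheory ENNReal Set

noncomputable section

/-- The `μ`-completion of the σ-algebra `m`. -/
def muCompletion {α : Type*} (m : MeasurableSpace α) (μ : @Measure α m) : MeasurableSpace α :=
  letI := m
  inferInstanceAs (MeasurableSpace (MeasureTheory.NullMeasurableSpace α μ))

/-- The universal completion of a σ-algebra: the intersection of the `μ`-completions
over all finite nonnegative measures `μ`. -/
def univCompletion {α : Type*} (m : MeasurableSpace α) : MeasurableSpace α :=
  ⨅ (μ : @Measure α m) (_ : @IsFiniteMeasure α m μ), muCompletion m μ

/-- `Lip_c`: bounded continuous functions `u : S → ℝ` with `|u x - u y| ≤ c x y`. -/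
def LipC {S : Type*} [TopologicalSpace S] (c : S → S → ℝ) : Set (S → ℝ) :=
  {u | Continuous u ∧ (∃ M, ∀ x, |u x| ≤ M) ∧ ∀ x y, |u x - u y| ≤ c x y}

/-- Condition (★): `c x y = sup_{u ∈ Lip_c} |u x - u y|` for all `x, y`. -/
def StarCond {S : Type*} [TopologicalSpace S] (c : S → S → ℝ) : Prop :=
  ∀ x y, c x y = sSup {r : ℝ | ∃ u ∈ LipC c, r = |u x - u y|}

/-- `D(μ,ν)`: couplings of `μ` and `ν`, i.e. probability measures on `S × S`
with first margin `μ` and second margin `ν`. -/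
def Couplings {S : Type*} [MeasurableSpace S] (μ ν : Measure S) : Set (Measure (S × S)) :=
  {π | IsProbabilityMeasure π ∧ π.map Prod.fst = μ ∧ π.map Prod.snd = ν}

/-- The Kantorovich–Rubinštein functional `KR_c(μ,ν)`. -/
def KR {S : Type*} [MeasurableSpace S] (c : S → S → ℝ) (μ ν : Measure S) : ℝ≥0∞ :=
  ⨅ π ∈ Couplings μ ν, ∫⁻ p, ENNReal.ofReal (c p.1 p.2) ∂π

/-- The dual functional `ℓ_c(μ,ν) = sup_{f ∈ Lip_c} |∫ f dμ - ∫ f dν|`. -/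
def lipDist {S : Type*} [TopologicalSpace S] [MeasurableSpace S] (c : S → S → ℝ)
    (μ ν : Measure S) : ℝ≥0∞ :=
  ⨆ u ∈ LipC c, ENNReal.ofReal |∫ x, u x ∂μ - ∫ x, u x ∂ν|

/-- Regular conditional distribution of `Z` given the sub-σ-algebra `M`. -/
def IsRCD {Ω S : Type*} {mΩ : MeasurableSpace Ω} [MeasurableSpace S]
    (P : @Measure Ω mΩ) (M : MeasurableSpace Ω) (Z : Ω → S) (κ : Ω → Measure S) : Prop :=
  letI := mΩ
  (∀ ω, IsProbabilityMeasure (κ ω)) ∧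
  (∀ B : Set S, MeasurableSet B → Measurable[M] (fun ω => κ ω B)) ∧
  (∀ A : Set Ω, MeasurableSet[M] A → ∀ B : Set S, MeasurableSet B →
    P (A ∩ Z ⁻¹' B) = ∫⁻ ω in A, κ ω B ∂P)

/-- The law `P_X` of a random variable. -/
def law {Ω S : Type*} {mΩ : MeasurableSpace Ω} [MeasurableSpace S]
    (P : @Measure Ω mΩ) (X : Ω → S) : Measure S :=
  letI := mΩ
  P.map X

/-- The dependence coefficient
`τ_c(ℳ, X) = E[sup_{f ∈ Lip_c} |∫ f dP_{X|ℳ} - ∫ f dP_X|]`, expressed through a given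
regular conditional distribution `κ` of `X` given `ℳ`. -/
def tauC {Ω S : Type*} {mΩ : MeasurableSpace Ω} [TopologicalSpace S] [MeasurableSpace S]
    (c : S → S → ℝ) (P : @Measure Ω mΩ) (κ : Ω → Measure S) (X : Ω → S) : ℝ≥0∞ :=
  letI := mΩ
  ∫⁻ ω, ⨆ u ∈ LipC c, ENNReal.ofReal |∫ x, u x ∂(κ ω) - ∫ x, u x ∂(law P X)| ∂P

/-!
The supremum over `Lip_c` defining `lipDist` reduces to a countable family, so by monotone
convergence its integral is the supremum of the integrals of maxima over finite subfamilies, and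
such a maximum is realised by an integrand of `Λ` that selects a maximiser measurably in `ω`.
Conversely, the sections of `f ∈ Λ` lie in `Lip_c`, so the difference of integrals of `f` is at most
the integral of `lipDist`. Here `f` itself need not be integrable, but `f (ω, x) - f (ω, x₀)` is,
which reduces the integrability of `f` under either measure to that of `f (·, x₀)`.
-/

open Filter Topology TopologicalSpace

section PointwiseSeparability

/-- Requiring `g` to map a basic open set `U` into a basic open set `V` gives countably many
conditions on `g`, and they generate a topology on `L` finer than that of pointwise convergence. -/
theorem exists_countable_subset_seqClosure {S Y : Type*} [TopologicalSpace S]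
    [SecondCountableTopology S] [TopologicalSpace Y] [SecondCountableTopology Y]
    {L : Set (S → Y)} (hL : ∀ u ∈ L, Continuous u) :
    ∃ D ⊆ L, D.Countable ∧ L ⊆ seqClosure D := by
  let subbasis : Set (Set L) :=
    image2 (fun U V => {g : L | MapsTo g.1 U V}) (countableBasis S) (countableBasis Y)
  let τ : TopologicalSpace L := generateFrom subbasis
  have : SecondCountableTopology L :=
    ⟨subbasis, (countable_countableBasis S).image2 (countable_countableBasis Y) _, rfl⟩
  have tendsto_coe (u : L) : Tendsto (fun g : L => g.1) (𝓝 u) (𝓝 u.1) := by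
    refine tendsto_pi_nhds.2 fun x => ?_
    refine ((isBasis_countableBasis Y).nhds_hasBasis.tendsto_right_iff).2 fun V ⟨hV, hxV⟩ => ?_
    obtain ⟨U, hU, hxU, hUV⟩ := (isBasis_countableBasis S).exists_subset_of_mem_open hxV
      (((isBasis_countableBasis Y).isOpen hV).preimage (hL u u.2))
    have hopen : IsOpen {g : L | MapsTo g.1 U V} := isOpen_generateFrom_of_mem ⟨U, hU, V, hV, rfl⟩
    filter_upwards [hopen.mem_nhds hUV] with g hg using hg hxU
  obtain ⟨D, hDc, hD⟩ := exists_countable_dense L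
  refine ⟨Subtype.val '' D, by simp, hDc.image _, fun u hu => ?_⟩
  obtain ⟨d, hdD, hdu⟩ := mem_closure_iff_seq_limit.1 (hD ⟨u, hu⟩)
  exact ⟨fun n => d n, fun n => ⟨d n, hdD n, rfl⟩, (tendsto_coe _).comp hdu⟩

end PointwiseSeparability

section LipC

variable {S : Type*} [TopologicalSpace S] {c : S → S → ℝ}

theorem zero_mem_lipC (hc : ∀ x y, 0 ≤ c x y) : (fun _ => 0) ∈ LipC c :=
  ⟨continuous_const, ⟨0, by simp⟩, by simpa using hc⟩

theorem neg_mem_lipC {u : S → ℝ} (hu : u ∈ LipC c) : -u ∈ LipC c := by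
  obtain ⟨hcont, ⟨K, hK⟩, hlip⟩ := hu
  refine ⟨hcont.neg, ⟨K, by simpa using hK⟩, fun x y => ?_⟩
  simpa only [Pi.neg_apply, neg_sub_neg, abs_sub_comm (u y)] using hlip x y

theorem integrable_of_mem_lipC [MeasurableSpace S] [OpensMeasurableSpace S] {u : S → ℝ}
    (hu : u ∈ LipC c) (ρ : Measure S) [IsFiniteMeasure ρ] : Integrable u ρ := by
  obtain ⟨hcont, ⟨K, hK⟩, -⟩ := hu
  exact .of_bound hcont.measurable.aestronglyMeasurable K (.of_forall hK)

/-- The largest increment `|u x - u x₀|` over `u ∈ Lip_c`. Under (★) it is `c x x₀`; in general it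
is a measurable minorant of the possibly non-measurable `c · x₀`. -/
def lipEnvelope (c : S → S → ℝ) (x₀ x : S) : ℝ≥0∞ :=
  ⨆ u ∈ LipC c, ‖u x - u x₀‖ₑ

theorem enorm_sub_le_lipEnvelope {u : S → ℝ} (hu : u ∈ LipC c) (x₀ x : S) :
    ‖u x - u x₀‖ₑ ≤ lipEnvelope c x₀ x :=
  le_iSup₂ (f := fun u (_ : u ∈ LipC c) => ‖u x - u x₀‖ₑ) u hu

theorem lipEnvelope_le (c : S → S → ℝ) (x₀ x : S) :
    lipEnvelope c x₀ x ≤ ENNReal.ofReal (c x x₀) := by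
  refine iSup₂_le fun u hu => ?_
  rw [Real.enorm_eq_ofReal_abs]
  exact ENNReal.ofReal_le_ofReal (hu.2.2 x x₀)

variable [MeasurableSpace S]

theorem lipDist_eq_iSup_ofReal_sub (c : S → S → ℝ) (μ ν : Measure S) :
    lipDist c μ ν = ⨆ u ∈ LipC c, ENNReal.ofReal (∫ x, u x ∂μ - ∫ x, u x ∂ν) := by
  refine le_antisymm (iSup₂_le fun u hu => ?_)
    (iSup₂_mono fun u _ => ENNReal.ofReal_le_ofReal (le_abs_self _))
  rcases abs_choice (∫ x, u x ∂μ - ∫ x, u x ∂ν) with h | h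
  · exact le_iSup₂_of_le u hu (by rw [h])
  · refine le_iSup₂_of_le (-u) (neg_mem_lipC hu) ?_
    simp only [h, Pi.neg_apply, integral_neg, neg_sub, neg_sub_neg, le_refl]

/-- The functions in `Lip_c` bounded by a fixed `n` are treated separately, so that the
approximating sequences are dominated by a constant. -/
theorem exists_countable_lipDist_eq [SecondCountableTopology S] [OpensMeasurableSpace S]
    (c : S → S → ℝ) :
    ∃ D ⊆ LipC c, D.Countable ∧
      ∀ (μ ν : Measure S) [IsFiniteMeasure μ] [IsFiniteMeasure ν],
        lipDist c μ ν = ⨆ u ∈ D, ENNReal.ofReal (∫ x, u x ∂μ - ∫ x, u x ∂ν) := by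
  choose D hDsub hDcount hDdense using fun n : ℕ =>
    exists_countable_subset_seqClosure (L := {u ∈ LipC c | ∀ x, |u x| ≤ n}) fun u hu => hu.1.1
  have hDL : ⋃ n, D n ⊆ LipC c := iUnion_subset fun n u hu => (hDsub n hu).1
  refine ⟨⋃ n, D n, hDL, countable_iUnion hDcount, fun μ ν _ _ => ?_⟩
  rw [lipDist_eq_iSup_ofReal_sub]
  refine le_antisymm (iSup₂_le fun u hu => ?_) (biSup_mono hDL)
  obtain ⟨K, hK⟩ := hu.2.1
  obtain ⟨n, hn⟩ := exists_nat_ge K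
  obtain ⟨d, hd, hdu⟩ := hDdense n ⟨hu, fun x => (hK x).trans hn⟩
  have tendsto_integral (ρ : Measure S) [IsFiniteMeasure ρ] :
      Tendsto (fun k => ∫ x, d k x ∂ρ) atTop (𝓝 (∫ x, u x ∂ρ)) :=
    tendsto_integral_of_dominated_convergence (fun _ => (n : ℝ))
      (fun k => (hDsub n (hd k)).1.1.measurable.aestronglyMeasurable) (integrable_const _)
      (fun k => .of_forall (hDsub n (hd k)).2) (.of_forall (tendsto_pi_nhds.1 hdu))
  refine le_of_tendsto
    (ENNReal.tendsto_ofReal ((tendsto_integral μ).sub (tendsto_integral ν)))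
    (.of_forall fun k => le_iSup₂_of_le (d k) (mem_iUnion.2 ⟨n, hd k⟩) le_rfl)

theorem measurable_lipEnvelope [OpensMeasurableSpace S] (c : S → S → ℝ) (x₀ : S) :
    Measurable (lipEnvelope c x₀) := by
  refine (lowerSemicontinuous_biSup fun u hu => ?_ :
    LowerSemicontinuous fun x => ⨆ u ∈ LipC c, ‖u x - u x₀‖ₑ).measurable
  exact (hu.1.sub continuous_const).enorm.lowerSemicontinuous

end LipC

section LipIntegrands

variable {Ω S : Type*} [MeasurableSpace Ω] [TopologicalSpace S] [MeasurableSpace S]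
  {c : S → S → ℝ} {f : Ω × S → ℝ}

/-- The class `Λ` of jointly measurable integrands all of whose sections lie in `Lip_c`. -/
def lipIntegrands (Ω : Type*) [MeasurableSpace Ω] (c : S → S → ℝ) : Set (Ω × S → ℝ) :=
  {f | Measurable f ∧ ∀ ω, (fun x => f (ω, x)) ∈ LipC c}

/-- The integrands in `Λ` that are bounded uniformly over `Ω × S`, and not only in each section. -/
def boundedLipIntegrands (Ω : Type*) [MeasurableSpace Ω] (c : S → S → ℝ) : Set (Ω × S → ℝ) :=
  {f ∈ lipIntegrands Ω c | ∃ K, ∀ p, |f p| ≤ K}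

theorem comp_snd_mem_boundedLipIntegrands [OpensMeasurableSpace S] {u : S → ℝ} (hu : u ∈ LipC c) :
    (fun p : Ω × S => u p.2) ∈ boundedLipIntegrands Ω c :=
  ⟨⟨hu.1.measurable.comp measurable_snd, fun _ => hu⟩, hu.2.1.imp fun _ hK p => hK p.2⟩

theorem integrable_of_mem_boundedLipIntegrands (hf : f ∈ boundedLipIntegrands Ω c)
    (π : Measure (Ω × S)) [IsFiniteMeasure π] : Integrable f π := by
  obtain ⟨⟨hmeas, -⟩, K, hK⟩ := hf
  exact .of_bound hmeas.aestronglyMeasurable K (.of_forall hK)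

theorem ite_fst_mem_boundedLipIntegrands {g : Ω × S → ℝ} {A : Set Ω} [DecidablePred (· ∈ A)]
    (hA : MeasurableSet A) (hf : f ∈ boundedLipIntegrands Ω c)
    (hg : g ∈ boundedLipIntegrands Ω c) :
    (fun p => if p.1 ∈ A then f p else g p) ∈ boundedLipIntegrands Ω c := by
  obtain ⟨⟨hfm, hfL⟩, K, hK⟩ := hf
  obtain ⟨⟨hgm, hgL⟩, K', hK'⟩ := hg
  refine ⟨⟨Measurable.ite (measurable_fst hA) hfm hgm, fun ω => ?_⟩, max K K', fun p => ?_⟩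
  · by_cases hω : ω ∈ A
    · simpa only [hω, if_true] using hfL ω
    · simpa only [hω, if_false] using hgL ω
  · dsimp only
    split_ifs
    · exact (hK p).trans (le_max_left K K')
    · exact (hK' p).trans (le_max_right K K')

end LipIntegrands

section Kernel

theorem lintegral_iSup_eq_iSup_finset {α ι : Type*} [MeasurableSpace α] [Countable ι]
    {μ : Measure α} {g : ι → α → ℝ≥0∞} (hg : ∀ i, AEMeasurable (g i) μ) :
    ∫⁻ a, ⨆ i, g i a ∂μ = ⨆ t : Finset ι, ∫⁻ a, ⨆ i ∈ t, g i a ∂μ := by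
  have hmono : Monotone fun (t : Finset ι) a => ⨆ i ∈ t, g i a :=
    fun _ _ hst _ => biSup_mono fun _ hi => hst hi
  have hmeas (t : Finset ι) : AEMeasurable (fun a => ⨆ i ∈ t, g i a) μ :=
    .iSup fun i => .iSup fun _ => hg i
  calc ∫⁻ a, ⨆ i, g i a ∂μ
      = ∫⁻ a, ⨆ t : Finset ι, ⨆ i ∈ t, g i a ∂μ :=
        lintegral_congr fun a => iSup_eq_iSup_finset fun i => g i a
    _ = ⨆ t : Finset ι, ∫⁻ a, ⨆ i ∈ t, g i a ∂μ :=
        lintegral_iSup_directed hmeas hmono.directed_le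

theorem ofReal_integral_le_lintegral_ofReal {α : Type*} [MeasurableSpace α] (μ : Measure α)
    (g : α → ℝ) : ENNReal.ofReal (∫ a, g a ∂μ) ≤ ∫⁻ a, ENNReal.ofReal (g a) ∂μ := by
  by_cases hg : Integrable g μ
  · rw [integral_eq_lintegral_pos_part_sub_lintegral_neg_part hg]
    exact (ENNReal.ofReal_le_ofReal (sub_le_self _ ENNReal.toReal_nonneg)).trans
      ENNReal.ofReal_toReal_le
  · simp [integral_undef hg]

variable {Ω S : Type*} [MeasurableSpace Ω] [MeasurableSpace S] {κ η : Kernel Ω S}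
  {μ : Measure Ω} {f : Ω × S → ℝ}

/-- The pairing of the section `f (ω, ·)` with the signed measure `κ ω - η ω`. -/
def kernelGap (κ η : Kernel Ω S) (f : Ω × S → ℝ) (ω : Ω) : ℝ :=
  ∫ x, f (ω, x) ∂κ ω - ∫ x, f (ω, x) ∂η ω

theorem measurable_kernelGap [IsSFiniteKernel κ] [IsSFiniteKernel η] (hf : Measurable f) :
    Measurable (kernelGap κ η f) :=
  (hf.stronglyMeasurable.integral_kernel_prod_right'.sub
    hf.stronglyMeasurable.integral_kernel_prod_right').measurable

theorem integrable_kernelGap [SFinite μ] [IsSFiniteKernel κ] [IsSFiniteKernel η]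
    (hκ : Integrable f (μ ⊗ₘ κ)) (hη : Integrable f (μ ⊗ₘ η)) :
    Integrable (kernelGap κ η f) μ :=
  (Integrable.integral_compProd hκ).sub (Integrable.integral_compProd hη)

theorem integral_kernelGap [SFinite μ] [IsSFiniteKernel κ] [IsSFiniteKernel η]
    (hκ : Integrable f (μ ⊗ₘ κ)) (hη : Integrable f (μ ⊗ₘ η)) :
    ∫ ω, kernelGap κ η f ω ∂μ = ∫ p, f p ∂(μ ⊗ₘ κ) - ∫ p, f p ∂(μ ⊗ₘ η) := by
  rw [Measure.integral_compProd hκ, Measure.integral_compProd hη]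
  exact integral_sub (Integrable.integral_compProd hκ) (Integrable.integral_compProd hη)

variable [TopologicalSpace S] {c : S → S → ℝ}

theorem ofReal_kernelGap_le_lipDist (hf : f ∈ lipIntegrands Ω c) (κ η : Kernel Ω S) (ω : Ω) :
    ENNReal.ofReal (kernelGap κ η f ω) ≤ lipDist c (κ ω) (η ω) := by
  rw [lipDist_eq_iSup_ofReal_sub]
  exact le_iSup₂_of_le (fun x => f (ω, x)) (hf.2 ω) le_rfl

theorem measurable_lipDist [SecondCountableTopology S] [OpensMeasurableSpace S]
    (c : S → S → ℝ) (κ η : Kernel Ω S) [IsFiniteKernel κ] [IsFiniteKernel η] :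
    Measurable fun ω => lipDist c (κ ω) (η ω) := by
  obtain ⟨D, hDL, hDc, hD⟩ := exists_countable_lipDist_eq c
  simp_rw [hD]
  exact Measurable.biSup D hDc fun u hu => (measurable_kernelGap
    ((hDL hu).1.measurable.comp measurable_snd)).ennreal_ofReal

theorem directed_kernelGap (c : S → S → ℝ) (κ η : Kernel Ω S) [IsSFiniteKernel κ]
    [IsSFiniteKernel η] :
    Directed (· ≤ ·) fun f : boundedLipIntegrands Ω c => kernelGap κ η f := by
  classical
  rintro ⟨f, hf⟩ ⟨g, hg⟩
  let A : Set Ω := {ω | kernelGap κ η g ω ≤ kernelGap κ η f ω}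
  have hA : MeasurableSet A :=
    measurableSet_le (measurable_kernelGap hg.1.1) (measurable_kernelGap hf.1.1)
  let h : Ω × S → ℝ := fun p => if p.1 ∈ A then f p else g p
  have hgap (ω : Ω) : kernelGap κ η h ω = max (kernelGap κ η f ω) (kernelGap κ η g ω) := by
    by_cases hω : ω ∈ A
    · rw [max_eq_left hω]
      simp only [kernelGap, h, hω, if_true]
    · rw [max_eq_right (not_le.1 hω).le]
      simp only [kernelGap, h, hω, if_false]
  exact ⟨⟨h, ite_fst_mem_boundedLipIntegrands hA hf hg⟩,
    fun ω => (le_max_left _ _).trans_eq (hgap ω).symm,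
    fun ω => (le_max_right _ _).trans_eq (hgap ω).symm⟩

theorem exists_forall_le_kernelGap [OpensMeasurableSpace S] (hc : ∀ x y, 0 ≤ c x y)
    (κ η : Kernel Ω S) [IsSFiniteKernel κ] [IsSFiniteKernel η] (F : Finset (LipC c)) :
    ∃ f ∈ boundedLipIntegrands Ω c, (∀ ω, 0 ≤ kernelGap κ η f ω) ∧
      ∀ u ∈ F, ∀ ω, ∫ x, u.1 x ∂κ ω - ∫ x, u.1 x ∂η ω ≤ kernelGap κ η f ω := by
  classical
  let lift (u : LipC c) : boundedLipIntegrands Ω c := ⟨_, comp_snd_mem_boundedLipIntegrands u.2⟩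
  let zero : LipC c := ⟨_, zero_mem_lipC hc⟩
  have : Nonempty (boundedLipIntegrands Ω c) := ⟨lift zero⟩
  obtain ⟨⟨f, hfΛ⟩, hf⟩ := (directed_kernelGap c κ η).finset_le ((insert zero F).image lift)
  have le_gap (u : LipC c) (hu : u ∈ insert zero F) (ω : Ω) :
      ∫ x, u.1 x ∂κ ω - ∫ x, u.1 x ∂η ω ≤ kernelGap κ η f ω :=
    hf _ (Finset.mem_image_of_mem lift hu) ω
  refine ⟨f, hfΛ, fun ω => ?_, fun u hu => le_gap u (Finset.mem_insert_of_mem hu)⟩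
  simpa [zero] using le_gap zero (Finset.mem_insert_self _ _) ω

theorem lintegral_lipDist_le_iSup [SecondCountableTopology S] [OpensMeasurableSpace S]
    (hc : ∀ x y, 0 ≤ c x y) (μ : Measure Ω) [IsFiniteMeasure μ] (κ η : Kernel Ω S)
    [IsFiniteKernel κ] [IsFiniteKernel η] :
    ∫⁻ ω, lipDist c (κ ω) (η ω) ∂μ ≤ ⨆ f ∈ boundedLipIntegrands Ω c,
      ENNReal.ofReal (∫ p, f p ∂(μ ⊗ₘ κ) - ∫ p, f p ∂(μ ⊗ₘ η)) := by
  obtain ⟨D, hDL, hDc, hD⟩ := exists_countable_lipDist_eq c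
  have : Countable D := hDc.to_subtype
  let gap (u : D) (ω : Ω) : ℝ := ∫ x, u.1 x ∂κ ω - ∫ x, u.1 x ∂η ω
  have measurable_gap (u : D) : Measurable (gap u) :=
    measurable_kernelGap ((hDL u.2).1.measurable.comp measurable_snd)
  have lipDist_eq (ω : Ω) : lipDist c (κ ω) (η ω) = ⨆ u, ENNReal.ofReal (gap u ω) := by
    rw [hD, iSup_subtype']
  simp_rw [lipDist_eq]
  rw [lintegral_iSup_eq_iSup_finset fun u => (measurable_gap u).ennreal_ofReal.aemeasurable]
  refine iSup_le fun F => ?_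
  obtain ⟨f, hf, gap_nonneg, le_gap⟩ :=
    exists_forall_le_kernelGap hc κ η (F.map (embeddingOfSubset D (LipC c) hDL))
  have hfκ : Integrable f (μ ⊗ₘ κ) := integrable_of_mem_boundedLipIntegrands hf _
  have hfη : Integrable f (μ ⊗ₘ η) := integrable_of_mem_boundedLipIntegrands hf _
  calc ∫⁻ ω, ⨆ u ∈ F, ENNReal.ofReal (gap u ω) ∂μ
      ≤ ∫⁻ ω, ENNReal.ofReal (kernelGap κ η f ω) ∂μ :=
        lintegral_mono fun ω => iSup₂_le fun u hu =>
          ENNReal.ofReal_le_ofReal (le_gap _ (Finset.mem_map_of_mem _ hu) ω)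
    _ = ENNReal.ofReal (∫ ω, kernelGap κ η f ω ∂μ) :=
        (ofReal_integral_eq_lintegral_ofReal (integrable_kernelGap hfκ hfη)
          (.of_forall gap_nonneg)).symm
    _ = ENNReal.ofReal (∫ p, f p ∂(μ ⊗ₘ κ) - ∫ p, f p ∂(μ ⊗ₘ η)) := by
        rw [integral_kernelGap hfκ hfη]
    _ ≤ ⨆ f ∈ boundedLipIntegrands Ω c,
          ENNReal.ofReal (∫ p, f p ∂(μ ⊗ₘ κ) - ∫ p, f p ∂(μ ⊗ₘ η)) :=
        le_iSup₂_of_le f hf le_rfl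

end Kernel

section Envelope

variable {Ω S : Type*} [MeasurableSpace Ω] [TopologicalSpace S] [MeasurableSpace S]
  [OpensMeasurableSpace S] {c : S → S → ℝ} {x₀ : S} {κ η : Kernel Ω S} [IsMarkovKernel κ]
  [IsMarkovKernel η] {μ : Measure Ω} [SFinite μ] {f : Ω × S → ℝ}

theorem integrable_sub_section (hf : f ∈ lipIntegrands Ω c)
    (hκ : ∫⁻ x, lipEnvelope c x₀ x ∂(κ ∘ₘ μ) ≠ ∞) :
    Integrable (fun p => f p - f (p.1, x₀)) (μ ⊗ₘ κ) := by
  have hmeas : Measurable fun p : Ω × S => f p - f (p.1, x₀) :=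
    hf.1.sub (hf.1.comp (by fun_prop))
  refine ⟨hmeas.aestronglyMeasurable, lt_of_le_of_lt ?_ hκ.lt_top⟩
  calc ∫⁻ p, ‖f p - f (p.1, x₀)‖ₑ ∂(μ ⊗ₘ κ)
      ≤ ∫⁻ p, lipEnvelope c x₀ p.2 ∂(μ ⊗ₘ κ) :=
        lintegral_mono fun p => enorm_sub_le_lipEnvelope (hf.2 p.1) x₀ p.2
    _ = ∫⁻ x, lipEnvelope c x₀ x ∂(κ ∘ₘ μ) := by
        rw [← Measure.snd_compProd, Measure.snd,
          lintegral_map (measurable_lipEnvelope c x₀) measurable_snd]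

theorem integrable_compProd_iff_section (hf : f ∈ lipIntegrands Ω c)
    (hκ : ∫⁻ x, lipEnvelope c x₀ x ∂(κ ∘ₘ μ) ≠ ∞) :
    Integrable f (μ ⊗ₘ κ) ↔ Integrable (fun ω => f (ω, x₀)) μ := by
  have hmeas : Measurable fun ω => f (ω, x₀) := hf.1.comp (by fun_prop)
  conv_rhs => rw [← Measure.fst_compProd μ κ, Measure.fst,
    integrable_map_measure hmeas.aestronglyMeasurable measurable_fst.aemeasurable]
  rw [← integrable_add_iff_integrable_right (integrable_sub_section hf hκ)
    (g := (fun ω => f (ω, x₀)) ∘ Prod.fst)]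
  exact integrable_congr (.of_forall fun p => by simp)

theorem integral_integral_eq_integral_compProd (hf : f ∈ lipIntegrands Ω c)
    (hκ : ∫⁻ x, lipEnvelope c x₀ x ∂(κ ∘ₘ μ) ≠ ∞) :
    ∫ ω, ∫ x, f (ω, x) ∂κ ω ∂μ = ∫ p, f p ∂(μ ⊗ₘ κ) := by
  by_cases hfκ : Integrable f (μ ⊗ₘ κ)
  · exact (Measure.integral_compProd hfκ).symm
  have hsplit (ω : Ω) :
      ∫ x, f (ω, x) ∂κ ω = ∫ x, (f (ω, x) - f (ω, x₀)) ∂κ ω + f (ω, x₀) := by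
    rw [integral_sub (integrable_of_mem_lipC (hf.2 ω) _) (integrable_const _)]
    simp
  rw [integral_undef hfκ, integral_undef fun h => hfκ ?_]
  rw [integrable_compProd_iff_section hf hκ]
  simp_rw [hsplit] at h
  exact (integrable_add_iff_integrable_right
    (Integrable.integral_compProd (integrable_sub_section hf hκ))).1 h

/-- When `f (·, x₀)` is not integrable, neither integral on the left converges, so both have the
junk value `0`. -/
theorem ofReal_integral_sub_integral_le_lintegral_lipDist (hf : f ∈ lipIntegrands Ω c)
    (hκ : ∫⁻ x, lipEnvelope c x₀ x ∂(κ ∘ₘ μ) ≠ ∞)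
    (hη : ∫⁻ x, lipEnvelope c x₀ x ∂(η ∘ₘ μ) ≠ ∞) :
    ENNReal.ofReal (∫ p, f p ∂(μ ⊗ₘ κ) - ∫ p, f p ∂(μ ⊗ₘ η)) ≤
      ∫⁻ ω, lipDist c (κ ω) (η ω) ∂μ := by
  by_cases hbase : Integrable (fun ω => f (ω, x₀)) μ
  · have hfκ := (integrable_compProd_iff_section hf hκ).2 hbase
    have hfη := (integrable_compProd_iff_section hf hη).2 hbase
    calc ENNReal.ofReal (∫ p, f p ∂(μ ⊗ₘ κ) - ∫ p, f p ∂(μ ⊗ₘ η))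
        = ENNReal.ofReal (∫ ω, kernelGap κ η f ω ∂μ) := by rw [integral_kernelGap hfκ hfη]
      _ ≤ ∫⁻ ω, ENNReal.ofReal (kernelGap κ η f ω) ∂μ := ofReal_integral_le_lintegral_ofReal _ _
      _ ≤ ∫⁻ ω, lipDist c (κ ω) (η ω) ∂μ :=
          lintegral_mono (ofReal_kernelGap_le_lipDist hf κ η)
  · rw [integral_undef (mt (integrable_compProd_iff_section hf hκ).1 hbase),
      integral_undef (mt (integrable_compProd_iff_section hf hη).1 hbase)]
    simp

theorem lintegral_lipDist_eq_iSup [SecondCountableTopology S] (hc : ∀ x y, 0 ≤ c x y)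
    (μ : Measure Ω) [IsFiniteMeasure μ] (hκ : ∫⁻ x, lipEnvelope c x₀ x ∂(κ ∘ₘ μ) ≠ ∞)
    (hη : ∫⁻ x, lipEnvelope c x₀ x ∂(η ∘ₘ μ) ≠ ∞) :
    ∫⁻ ω, lipDist c (κ ω) (η ω) ∂μ = ⨆ f ∈ lipIntegrands Ω c,
      ENNReal.ofReal (∫ p, f p ∂(μ ⊗ₘ κ) - ∫ p, f p ∂(μ ⊗ₘ η)) :=
  le_antisymm ((lintegral_lipDist_le_iSup hc μ κ η).trans (biSup_mono fun _ hf => hf.1))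
    (iSup₂_le fun _ hf => ofReal_integral_sub_integral_le_lintegral_lipDist hf hκ hη)

end Envelope

section Disintegration

theorem lintegral_lipDist_eq_iSup_of_map_prodMk_eq_compProd {Ω Ω' S : Type*}
    {mΩ : MeasurableSpace Ω} {mΩ' : MeasurableSpace Ω'} [TopologicalSpace S]
    [SecondCountableTopology S] [MeasurableSpace S] [OpensMeasurableSpace S] {c : S → S → ℝ}
    (hc : ∀ x y, 0 ≤ c x y) {P : Measure Ω} [IsProbabilityMeasure P] {T : Ω → Ω'} {X : Ω → S}
    (hT : AEMeasurable T P) (hX : AEMeasurable X P) {κ : Kernel Ω' S} [IsMarkovKernel κ]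
    (hκ : P.map (fun ω => (T ω, X ω)) = P.map T ⊗ₘ κ) {x₀ : S}
    (hint : ∫⁻ x, lipEnvelope c x₀ x ∂(P.map X) ≠ ∞) :
    ∫⁻ ω, lipDist c (κ (T ω)) (P.map X) ∂P = ⨆ f ∈ lipIntegrands Ω' c,
      ENNReal.ofReal (∫ ω, f (T ω, X ω) ∂P - ∫ ω, ∫ x, f (T ω, x) ∂(P.map X) ∂P) := by
  have : IsProbabilityMeasure (P.map X) := Measure.isProbabilityMeasure_map hX
  have : IsProbabilityMeasure (P.map T) := Measure.isProbabilityMeasure_map hT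
  let η : Kernel Ω' S := Kernel.const Ω' (P.map X)
  have comp_κ : κ ∘ₘ P.map T = P.map X := by
    rw [← Measure.snd_compProd, ← hκ, Measure.snd,
      AEMeasurable.map_map_of_aemeasurable measurable_snd.aemeasurable (hT.prodMk hX)]
    rfl
  have comp_η : η ∘ₘ P.map T = P.map X := by simp [η]
  have lintegral_eq : ∫⁻ ω, lipDist c (κ (T ω)) (P.map X) ∂P =
      ∫⁻ ω', lipDist c (κ ω') (η ω') ∂(P.map T) :=
    (lintegral_map' (measurable_lipDist c κ η).aemeasurable hT).symm
  rw [lintegral_eq, lintegral_lipDist_eq_iSup hc (P.map T) (by rwa [comp_κ]) (by rwa [comp_η])]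
  refine biSup_congr fun f hf => ?_
  have joint : ∫ p, f p ∂(P.map T ⊗ₘ κ) = ∫ ω, f (T ω, X ω) ∂P := by
    rw [← hκ, integral_map (hT.prodMk hX) hf.1.aestronglyMeasurable]
  have product : ∫ p, f p ∂(P.map T ⊗ₘ η) = ∫ ω, ∫ x, f (T ω, x) ∂(P.map X) ∂P := by
    rw [← integral_integral_eq_integral_compProd hf (by rwa [comp_η]), integral_map hT
      hf.1.stronglyMeasurable.integral_kernel_prod_right'.aestronglyMeasurable]
    rfl
  rw [joint, product]

theorem map_prodMk_eq_compProd_of_measure_inter {Ω Ω' S : Type*} {mΩ : MeasurableSpace Ω}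
    {mΩ' : MeasurableSpace Ω'} [MeasurableSpace S] {P : Measure Ω} [IsFiniteMeasure P]
    {T : Ω → Ω'} {X : Ω → S} (hT : Measurable T) (hX : Measurable X) {κ : Kernel Ω' S}
    [IsSFiniteKernel κ]
    (h : ∀ A, MeasurableSet A → ∀ B, MeasurableSet B →
      P (T ⁻¹' A ∩ X ⁻¹' B) = ∫⁻ ω in T ⁻¹' A, κ (T ω) B ∂P) :
    P.map (fun ω => (T ω, X ω)) = P.map T ⊗ₘ κ := by
  refine Measure.ext_prod fun {A B} hA hB => ?_
  rw [Measure.compProd_apply_prod hA hB, Measure.map_apply (hT.prodMk hX) (hA.prod hB),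
    setLIntegral_map hA (κ.measurable_coe hB) hT]
  exact h A hA B hB

variable {Ω S : Type*} {M mΩ : MeasurableSpace Ω} [MeasurableSpace S] {P : Measure Ω}
  {X : Ω → S} {κ : Ω → Measure S}

/-- A regular conditional distribution given `M`, as a kernel whose source carries the
σ-algebra `M` instead of the ambient one. -/
def IsRCD.kernel (h : IsRCD P M X κ) : Kernel[M] Ω S :=
  @Kernel.mk Ω S M _ κ (@Measure.measurable_of_measurable_coe S Ω _ M κ h.2.1)

theorem IsRCD.isMarkovKernel (h : IsRCD P M X κ) : @IsMarkovKernel Ω S M _ h.kernel :=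
  @IsMarkovKernel.mk Ω S M _ h.kernel h.1

theorem IsRCD.map_prodMk_eq_compProd [IsFiniteMeasure P] (h : IsRCD P M X κ) (hM : M ≤ mΩ)
    (hX : Measurable X) :
    @Measure.map Ω (Ω × S) mΩ (@Prod.instMeasurableSpace Ω S M _) (fun ω => (ω, X ω)) P =
      @Measure.compProd Ω S M _ (@Measure.map Ω Ω mΩ M id P) h.kernel :=
  have := h.isMarkovKernel
  map_prodMk_eq_compProd_of_measure_inter (mΩ' := M) (T := id) (measurable_id'' hM) hX h.2.2

end Disintegration

theorem tauC_eq_sup_integrands_general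
    {S : Type*} [TopologicalSpace S] [SecondCountableTopology S] [MeasurableSpace S]
    [OpensMeasurableSpace S] {Ω : Type*} {mΩ : MeasurableSpace Ω} (P : Measure Ω)
    [IsProbabilityMeasure P] (c : S → S → ℝ) (hc0 : ∀ x y, 0 ≤ c x y)
    (X : Ω → S) (hX : Measurable X)
    (x₀ : S) (hXint : ∫⁻ x, ENNReal.ofReal (c x x₀) ∂(P.map X) < ⊤)
    (M : MeasurableSpace Ω) (hM : M ≤ mΩ)
    (κX : Ω → Measure S) (hκX : IsRCD P M X κX) :
    tauC c P κX X =
      ⨆ f ∈ {f : Ω × S → ℝ |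
          (@Measurable (Ω × S) ℝ (@Prod.instMeasurableSpace Ω S M _) _ f) ∧
          ∀ ω, (fun x => f (ω, x)) ∈ LipC c},
        ENNReal.ofReal
          (∫ ω, f (ω, X ω) ∂P - ∫ ω, ∫ x, f (ω, x) ∂(law P X) ∂P) := by
  have := hκX.isMarkovKernel
  have hint : ∫⁻ x, lipEnvelope c x₀ x ∂(law P X) ≠ ∞ :=
    ((lintegral_mono (lipEnvelope_le c x₀)).trans_lt hXint).ne
  exact (lintegral_lipDist_eq_iSup_of_map_prodMk_eq_compProd (mΩ' := M) (T := id) hc0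
    (measurable_id'' hM).aemeasurable hX.aemeasurable (hκX.map_prodMk_eq_compProd hM hX) hint :)

/-- **Equivalent expression of the dependence coefficient**:
`τ_c(ℳ, X) = sup_{f ∈ Λ} [∫ f(ω, X(ω)) dP(ω) - ∫ (∫ f(ω, x) dP_X(x)) dP(ω)]`, where
`Λ` is the set of `ℳ ⊗ B(S)`-measurable maps `f : Ω × S → ℝ` with `f(ω,·) ∈ Lip_c`
for every `ω`. -/
theorem tauC_eq_sup_integrands
    {S : Type*} [TopologicalSpace S] [PolishSpace S] [MeasurableSpace S] [BorelSpace S]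
    {Ω : Type*} [mΩ : MeasurableSpace Ω] (P : Measure Ω) [IsProbabilityMeasure P]
    (c : S → S → ℝ) (hc0 : ∀ x y, 0 ≤ c x y) (hstar : StarCond c)
    (X : Ω → S) (hX : Measurable X)
    (x₀ : S) (hXint : ∫⁻ x, ENNReal.ofReal (c x x₀) ∂(P.map X) < ⊤)
    (M : MeasurableSpace Ω) (hM : M ≤ mΩ)
    (κX : Ω → Measure S) (hκX : IsRCD P M X κX) :
    tauC c P κX X =
      ⨆ f ∈ {f : Ω × S → ℝ |
          (@Measurable (Ω × S) ℝ (@Prod.instMeasurableSpace Ω S M _) _ f) ∧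
          ∀ ω, (fun x => f (ω, x)) ∈ LipC c},
        ENNReal.ofReal
          (∫ ω, f (ω, X ω) ∂P - ∫ ω, ∫ x, f (ω, x) ∂(law P X) ∂P) :=
  tauC_eq_sup_integrands_general P c hc0 X hX x₀ hXint M hM κX hκX

end
end

section
/- Let S be a Polish space, (Ω, 𝒜, P) a probability space, ℳ a sub-σ-algebra of 𝒜, and X an S-valued random variable. Assume there exists a random variable U uniformly distributed on [0,1] and independent of σ(X) ∨ ℳ. Then there exists a σ(U) ∨ σ(X) ∨ ℳ-measurable random variable X* : Ω → S, independent of ℳ and with the same law as X, such that P(X ≠ X*) = (1/2) E[ ‖P_{X|ℳ} − P_X‖_v ]. -/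
/-!
Two measures `μ` and `ν` of equal mass split as `μ = μ ⊓ ν + (μ - ν)` and `ν = μ ⊓ ν + (ν - μ)`.
Coupling the common part along the diagonal and the two excesses by their normalized product gives
a coupling of `μ` and `ν` whose mass off the diagonal is `(μ - ν) univ`, half the total variation
distance. It depends measurably on `(μ, ν)` along kernels, so for each `ω` one may couple the
conditional law of `X` given `ℳ` with any `ℳ`-measurable target law, and disintegrate the coupling
with respect to its first marginal. The uniform variable `U` is the randomness used to sample `X*`
from the disintegration at the given value of `X`; the pair `(X, X*)` then has the maximal coupling
as conditional law given `ℳ`. A constant target law makes `X*` independent of `ℳ`.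
-/

open MeasureTheory ProbabilityTheory ENNReal Set

noncomputable section

/-- The total variation norm `‖μ - ν‖_v` of the difference of two finite measures. -/
def tvDist {α : Type*} [MeasurableSpace α] (μ ν : Measure α) : ℝ≥0∞ :=
  (μ - ν) Set.univ + (ν - μ) Set.univ

section MeasureSub

variable {α : Type*} [MeasurableSpace α] (μ ν : Measure α) [IsFiniteMeasure μ] [IsFiniteMeasure ν]

lemma inf_add_sub_measure : μ ⊓ ν + (μ - ν) = μ := by
  have : IsFiniteMeasure (μ ⊓ ν) := isFiniteMeasure_of_le μ inf_le_left
  apply le_antisymm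
  · have h_antitone : μ - ν ≤ μ - μ ⊓ ν := by
      refine Measure.sub_le_of_le_add ?_
      calc μ = μ - μ ⊓ ν + μ ⊓ ν := (Measure.sub_add_cancel_of_le inf_le_left).symm
        _ ≤ μ - μ ⊓ ν + ν := by gcongr; exact inf_le_right
    calc μ ⊓ ν + (μ - ν) ≤ μ ⊓ ν + (μ - μ ⊓ ν) := by gcongr
      _ = μ := by rw [add_comm, Measure.sub_add_cancel_of_le inf_le_left]
  · have h_le_inf : μ - (μ - ν) ≤ μ ⊓ ν := by
      refine le_inf Measure.sub_le (Measure.sub_le_of_le_add ?_)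
      rw [add_comm]
      exact Measure.sub_le_iff_le_add.1 le_rfl
    exact Measure.sub_le_iff_le_add.1 h_le_inf

lemma inf_eq_sub_sub_measure : μ ⊓ ν = μ - (μ - ν) := by
  conv_rhs => enter [1]; rw [← inf_add_sub_measure μ ν]
  exact Measure.add_sub_cancel.symm

variable {μ ν}

lemma sub_measure_univ_comm (h : μ univ = ν univ) : (μ - ν) univ = (ν - μ) univ := by
  have : IsFiniteMeasure (μ ⊓ ν) := isFiniteMeasure_of_le μ inf_le_left
  refine (ENNReal.add_right_inj (measure_ne_top (μ ⊓ ν) univ)).1 ?_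
  rw [← Measure.add_apply, ← Measure.add_apply, inf_add_sub_measure, inf_comm,
    inf_add_sub_measure, h]

lemma tvDist_div_two (h : μ univ = ν univ) : tvDist μ ν / 2 = (μ - ν) univ := by
  rw [tvDist, ← sub_measure_univ_comm h, ENNReal.add_div, ENNReal.add_halves]

end MeasureSub

section MaximalCoupling

variable {S : Type*} [MeasurableSpace S]

lemma fst_sub_snd_univ_le_compl_diagonal (π : Measure (S × S)) :
    (π.fst - π.snd) univ ≤ π (diagonal S)ᶜ := by
  have h_marginals : π.fst ≤ (π.restrict (diagonal S)ᶜ).fst + π.snd := by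
    refine Measure.le_iff.2 fun B hB => ?_
    rw [Measure.add_apply, Measure.fst_apply hB, Measure.fst_apply hB, Measure.snd_apply hB,
      Measure.restrict_apply (measurable_fst hB)]
    refine (measure_mono fun p hp => ?_).trans (measure_union_le _ _)
    by_cases hdiag : p ∈ diagonal S
    · exact Or.inr (by rwa [mem_preimage, ← mem_diagonal_iff.1 hdiag])
    · exact Or.inl ⟨hp, hdiag⟩
  calc (π.fst - π.snd) univ ≤ (π.restrict (diagonal S)ᶜ).fst univ :=
        Measure.sub_le_of_le_add h_marginals univ
    _ = π (diagonal S)ᶜ := by rw [Measure.fst_univ, Measure.restrict_apply_univ]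

lemma inv_univ_smul_univ_smul (μ : Measure S) [IsFiniteMeasure μ] :
    (μ univ)⁻¹ • μ univ • μ = μ := by
  rcases eq_or_ne μ 0 with rfl | hμ
  · simp
  · rw [smul_smul, ENNReal.inv_mul_cancel (Measure.measure_univ_ne_zero.2 hμ)
      (measure_ne_top μ univ), one_smul]

/-- The maximal coupling of two finite measures of equal mass: the common part `μ ⊓ ν` is put on the
diagonal, and the mutual excesses `μ - ν` and `ν - μ`, which also have equal mass, are coupled by
their normalized product. When `μ = ν` the second term is `∞ • 0 = 0`. -/
def maximalCoupling (μ ν : Measure S) : Measure (S × S) :=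
  (μ ⊓ ν).map (fun x => (x, x)) + ((μ - ν) univ)⁻¹ • (μ - ν).prod (ν - μ)

variable {μ ν : Measure S} [IsFiniteMeasure μ] [IsFiniteMeasure ν]

lemma fst_maximalCoupling (h : μ univ = ν univ) : (maximalCoupling μ ν).fst = μ := by
  rw [maximalCoupling, Measure.fst, Measure.map_add _ _ measurable_fst,
    Measure.map_map measurable_fst (by fun_prop), Measure.map_smul, Measure.map_fst_prod,
    ← sub_measure_univ_comm h, inv_univ_smul_univ_smul]
  exact (congrArg (· + _) Measure.map_id).trans (inf_add_sub_measure μ ν)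

lemma snd_maximalCoupling (h : μ univ = ν univ) : (maximalCoupling μ ν).snd = ν := by
  rw [maximalCoupling, Measure.snd, Measure.map_add _ _ measurable_snd,
    Measure.map_map measurable_snd (by fun_prop), Measure.map_smul, Measure.map_snd_prod,
    sub_measure_univ_comm h, inv_univ_smul_univ_smul, inf_comm]
  exact (congrArg (· + _) Measure.map_id).trans (inf_add_sub_measure ν μ)

lemma maximalCoupling_compl_diagonal [MeasurableEq S] (h : μ univ = ν univ) :
    maximalCoupling μ ν (diagonal S)ᶜ = tvDist μ ν / 2 := by
  rw [tvDist_div_two h]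
  apply le_antisymm
  · have h_inf : (μ ⊓ ν).map (fun x => (x, x)) (diagonal S)ᶜ = 0 := by
      rw [Measure.map_apply (by fun_prop) measurableSet_diagonal.compl]
      simp [diagonal, preimage]
    calc maximalCoupling μ ν (diagonal S)ᶜ
        = ((μ - ν) univ)⁻¹ * (μ - ν).prod (ν - μ) (diagonal S)ᶜ := by
          rw [maximalCoupling, Measure.add_apply, h_inf, zero_add, Measure.smul_apply, smul_eq_mul]
      _ ≤ ((μ - ν) univ)⁻¹ * (μ - ν).prod (ν - μ) univ := by gcongr; exact subset_univ _
      _ = ((μ - ν) univ)⁻¹ * (μ - ν) univ * (μ - ν) univ := by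
          rw [← univ_prod_univ, Measure.prod_prod, sub_measure_univ_comm h, mul_assoc]
      _ ≤ (μ - ν) univ := mul_le_of_le_one_left' (ENNReal.inv_mul_le_one _)
  -- The coupling inequality stands in for the mutual singularity of the two excesses.
  · simpa only [fst_maximalCoupling h, snd_maximalCoupling h]
      using fst_sub_snd_univ_le_compl_diagonal (maximalCoupling μ ν)

end MaximalCoupling

section Kernel

variable {E S : Type*} [MeasurableSpace E] [MeasurableSpace S]
  [MeasurableSpace.CountableOrCountablyGenerated E S]

lemma measurable_kernel_sub (κ η : Kernel E S) [IsFiniteKernel κ] [IsFiniteKernel η] :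
    Measurable fun e => κ e - η e := by
  have h_density (ξ : Kernel E S) [IsFiniteKernel ξ] (hξ : ξ ≤ κ + η) (e : E) :
      ((κ + η) e).withDensity (ξ.rnDeriv (κ + η) e) = ξ e := by
    rw [← Kernel.withDensity_apply _ (Kernel.measurable_rnDeriv ξ (κ + η))]
    exact Kernel.withDensity_rnDeriv_eq (Measure.absolutelyContinuous_of_le (hξ e))
  -- `κ e - η e` has as density the positive part of the difference of the jointly measurable
  -- densities of `κ` and `η`, since subtraction in `ℝ≥0∞` is truncated.
  have h_sub (e : E) : κ e - η e = (κ + η).withDensity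
      (κ.rnDeriv (κ + η) - η.rnDeriv (κ + η)) e := by
    have hη := h_density η (fun _ => Measure.le_add_left le_rfl) e
    have : IsFiniteMeasure (((κ + η) e).withDensity (η.rnDeriv (κ + η) e)) := by
      rw [hη]; infer_instance
    rw [Kernel.withDensity_apply _
        ((Kernel.measurable_rnDeriv _ _).sub (Kernel.measurable_rnDeriv _ _)), Pi.sub_apply,
      Measure.withDensity_sub (Kernel.measurable_rnDeriv_right _ _ _)
        (Kernel.measurable_rnDeriv_right _ _ _), hη,
      h_density κ (fun _ => Measure.le_add_right le_rfl) e]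
  simp_rw [h_sub]
  exact Kernel.measurable _

/-- The kernel `e ↦ κ e - η e`: the part of `κ e` that exceeds `η e`, with the truncated
subtraction of measures. -/
def excessKernel (κ η : Kernel E S) [IsFiniteKernel κ] [IsFiniteKernel η] : Kernel E S :=
  ⟨fun e => κ e - η e, measurable_kernel_sub κ η⟩

variable (κ η : Kernel E S) [IsFiniteKernel κ] [IsFiniteKernel η]

lemma excessKernel_apply (e : E) : excessKernel κ η e = κ e - η e := rfl

lemma excessKernel_le : excessKernel κ η ≤ κ := fun _ => Measure.sub_le

instance : IsFiniteKernel (excessKernel κ η) := isFiniteKernel_of_le (excessKernel_le κ η)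

lemma measurable_maximalCoupling :
    Measurable fun e => maximalCoupling (κ e) (η e) := by
  have h_inf : Measurable fun e => (κ e ⊓ η e).map fun x => (x, x) := by
    simp_rw [inf_eq_sub_sub_measure, ← excessKernel_apply]
    exact (Measure.measurable_map _ (by fun_prop)).comp (Kernel.measurable _)
  have h_prod : Measurable fun e => (κ e - η e).prod (η e - κ e) := by
    simp_rw [← excessKernel_apply, ← Kernel.prod_apply]
    exact Kernel.measurable _
  refine h_inf.add (Measure.measurable_of_measurable_coe _ fun B hB => ?_)
  have h_mass := (Measure.measurable_coe MeasurableSet.univ).comp (measurable_kernel_sub κ η)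
  exact h_mass.inv.mul ((Measure.measurable_coe hB).comp h_prod)

/-- The maximal coupling of `κ e` and `η e`, as a kernel in the parameter `e`. -/
def maximalCouplingKernel : Kernel E (S × S) :=
  ⟨fun e => maximalCoupling (κ e) (η e), measurable_maximalCoupling κ η⟩

lemma maximalCouplingKernel_apply (e : E) :
    maximalCouplingKernel κ η e = maximalCoupling (κ e) (η e) := rfl

lemma fst_maximalCouplingKernel (h : ∀ e, κ e univ = η e univ) :
    (maximalCouplingKernel κ η).fst = κ := by
  ext1 e
  rw [Kernel.fst_apply, maximalCouplingKernel_apply]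
  exact fst_maximalCoupling (h e)

lemma snd_maximalCouplingKernel (h : ∀ e, κ e univ = η e univ) :
    (maximalCouplingKernel κ η).snd = η := by
  ext1 e
  rw [Kernel.snd_apply, maximalCouplingKernel_apply]
  exact snd_maximalCoupling (h e)

instance (κ η : Kernel E S) [IsMarkovKernel κ] [IsMarkovKernel η] :
    IsMarkovKernel (maximalCouplingKernel κ η) where
  isProbabilityMeasure e := by
    constructor
    rw [maximalCouplingKernel_apply, ← Measure.fst_univ, fst_maximalCoupling (by simp),
      measure_univ]

end Kernel

section HasCondDistrib

open unitInterval

variable {Ω E S T : Type*} [MeasurableSpace Ω] [MeasurableSpace E] [MeasurableSpace S]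
  [MeasurableSpace T] {P : Measure Ω} {X : Ω → S} {Y : Ω → E} {κ : Kernel E S}

lemma measurePreserving_projIcc_unitInterval :
    MeasurePreserving (projIcc (0 : ℝ) 1 zero_le_one) (volume.restrict (Icc 0 1)) volume where
  measurable := continuous_projIcc.measurable
  map_eq := by
    have h_comp : projIcc (0 : ℝ) 1 zero_le_one ∘ ((↑) : I → ℝ) = id :=
      funext (projIcc_val zero_le_one)
    rw [← unitInterval.measurePreserving_coe.map_eq,
      Measure.map_map continuous_projIcc.measurable measurable_subtype_coe, h_comp, Measure.map_id]

lemma hasCondDistrib_prodMk {Z : Ω → T} {L : Kernel (E × S) T} (hX : HasCondDistrib X Y κ P)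
    (hZ : HasCondDistrib Z (fun ω => (Y ω, X ω)) L P) :
    HasCondDistrib (fun ω => (X ω, Z ω)) Y (κ ⊗ₖ L) P where
  aemeasurable := by
    have := hX.aemeasurable_fst
    have := hX.aemeasurable_snd
    have := hZ.aemeasurable_snd
    fun_prop
  map_eq := by
    have := hX.aemeasurable_fst
    have := hX.aemeasurable_snd
    have := hZ.aemeasurable_snd
    calc P.map (fun ω => (Y ω, X ω, Z ω))
      _ = (P.map (fun ω => ((Y ω, X ω), Z ω))).map MeasurableEquiv.prodAssoc := by
        rw [AEMeasurable.map_map_of_aemeasurable (by fun_prop) (by fun_prop)]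
        rfl
      _ = (P.map Y ⊗ₘ κ ⊗ₘ L).map MeasurableEquiv.prodAssoc := by rw [hZ.map_eq, hX.map_eq]
      _ = P.map Y ⊗ₘ (κ ⊗ₖ L) := Measure.compProd_assoc'

lemma hasCondDistrib_iff_measure_inter [IsFiniteMeasure P] [IsFiniteKernel κ]
    (hX : AEMeasurable X P) (hY : AEMeasurable Y P) :
    HasCondDistrib X Y κ P ↔ ∀ A, MeasurableSet A → ∀ B, MeasurableSet B →
      P (Y ⁻¹' A ∩ X ⁻¹' B) = ∫⁻ ω in Y ⁻¹' A, κ (Y ω) B ∂P := by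
  have h_prod {A : Set E} (hA : MeasurableSet A) {B : Set S} (hB : MeasurableSet B) :
      P.map (fun ω => (Y ω, X ω)) (A ×ˢ B) = P (Y ⁻¹' A ∩ X ⁻¹' B) ∧
      (P.map Y ⊗ₘ κ) (A ×ˢ B) = ∫⁻ ω in Y ⁻¹' A, κ (Y ω) B ∂P := by
    refine ⟨?_, ?_⟩
    · rw [Measure.map_apply_of_aemeasurable (by fun_prop) (hA.prod hB), mk_preimage_prod]
    · rw [Measure.compProd_apply_prod hA hB, Measure.restrict_map_of_aemeasurable hY hA,
        lintegral_map' (κ.measurable_coe hB).aemeasurable hY.restrict]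
  refine ⟨fun h A hA B hB => ?_,
    fun h => ⟨by fun_prop, Measure.ext_prod fun {A B} hA hB => ?_⟩⟩
  · rw [← (h_prod hA hB).1, ← (h_prod hA hB).2, h.map_eq]
  · rw [(h_prod hA hB).1, (h_prod hA hB).2, h A hA B hB]

lemma exists_measurable_hasCondDistrib [IsFiniteMeasure P] [StandardBorelSpace S] [Nonempty S]
    (L : Kernel E S) [IsMarkovKernel L] (hY : AEMeasurable Y P)
    {U : Ω → ℝ} (hU : HasLaw U (volume.restrict (Icc 0 1)) P) (hYU : IndepFun Y U P) :
    ∃ G : E × ℝ → S, Measurable G ∧ HasCondDistrib (fun ω => G (Y ω, U ω)) Y L P := by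
  obtain ⟨g, hg, hgL⟩ := L.exists_measurable_map_eq_unitInterval
  let V : ℝ → I := projIcc (0 : ℝ) 1 zero_le_one
  have hV : Measurable V := measurePreserving_projIcc_unitInterval.measurable
  have hVU : HasLaw (V ∘ U) volume P := measurePreserving_projIcc_unitInterval.comp_hasLaw hU
  have h_law : P.map (fun ω => (Y ω, V (U ω))) = (P.map Y).prod volume := by
    rw [← hVU.map_eq]
    exact (indepFun_iff_map_prod_eq_prod_map_map hY hVU.aemeasurable).1
      (hYU.comp measurable_id hV)
  refine ⟨fun q => g q.1 (V q.2), by fun_prop, by have := hU.aemeasurable; fun_prop, ?_⟩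
  have hg_graph : Measurable fun q : E × I => (q.1, g q.1 q.2) := by fun_prop
  calc P.map (fun ω => (Y ω, g (Y ω) (V (U ω))))
      = (P.map (fun ω => (Y ω, V (U ω)))).map (fun q => (q.1, g q.1 q.2)) := by
        have := hU.aemeasurable
        rw [AEMeasurable.map_map_of_aemeasurable (by fun_prop) (by fun_prop)]
        rfl
    _ = P.map Y ⊗ₘ L := by
        ext D hD
        rw [h_law, Measure.map_apply hg_graph hD, Measure.prod_apply (hg_graph hD),
          Measure.compProd_apply hD]
        simp_rw [← hgL, Measure.map_apply hg.of_uncurry_left (measurable_prodMk_left hD)]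
        rfl

end HasCondDistrib

lemma exists_maximal_coupling_of_hasCondDistrib {Ω E S : Type*} [MeasurableSpace Ω]
    [MeasurableSpace E] [MeasurableSpace S] [StandardBorelSpace S] {P : Measure Ω}
    [IsProbabilityMeasure P] {X : Ω → S} {Y : Ω → E} {κ η : Kernel E S} [IsMarkovKernel κ]
    [IsMarkovKernel η] (hX : HasCondDistrib X Y κ P) {U : Ω → ℝ}
    (hU : HasLaw U (volume.restrict (Icc 0 1)) P)
    (hindep : IndepFun (fun ω => (Y ω, X ω)) U P) :
    ∃ G : (E × S) × ℝ → S, Measurable G ∧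
      HasCondDistrib (fun ω => G ((Y ω, X ω), U ω)) Y η P ∧
      P {ω | X ω ≠ G ((Y ω, X ω), U ω)} = (∫⁻ ω, tvDist (κ (Y ω)) (η (Y ω)) ∂P) / 2 := by
  have : Nonempty S := P.nonempty_of_neZero.map X
  obtain ⟨G, hG, hGL⟩ := exists_measurable_hasCondDistrib
    (maximalCouplingKernel κ η).condKernel hX.aemeasurable hU hindep
  have h_disintegrate := (maximalCouplingKernel κ η).disintegrate
    (maximalCouplingKernel κ η).condKernel
  have h_mass (e : E) : κ e univ = η e univ := measure_univ.trans measure_univ.symm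
  rw [fst_maximalCouplingKernel κ η h_mass] at h_disintegrate
  have h_joint : HasCondDistrib (fun ω => (X ω, G ((Y ω, X ω), U ω))) Y
      (maximalCouplingKernel κ η) P := h_disintegrate ▸ hasCondDistrib_prodMk hX hGL
  refine ⟨G, hG, ?_, ?_⟩
  · simpa only [snd_maximalCouplingKernel κ η h_mass] using h_joint.snd
  · have h_off := (hasCondDistrib_iff_measure_inter h_joint.aemeasurable_snd
      h_joint.aemeasurable_fst).1 h_joint univ .univ _ measurableSet_diagonal.compl
    rw [preimage_univ, univ_inter, Measure.restrict_univ] at h_off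
    simp_rw [maximalCouplingKernel_apply, maximalCoupling_compl_diagonal (h_mass _),
      div_eq_mul_inv] at h_off
    rwa [lintegral_mul_const' _ _ (by simp), ← div_eq_mul_inv] at h_off

namespace IsRCD

variable {Ω S : Type*} {M mΩ : MeasurableSpace Ω} [MeasurableSpace S] {P : Measure Ω}
  {Z : Ω → S} {κ : Ω → Measure S}

lemma measurable (h : IsRCD P M Z κ) : Measurable[M] κ :=
  @Measure.measurable_of_measurable_coe S Ω _ M κ h.2.1

lemma measure_inter_of_const {μ : Measure S} (h : IsRCD P M Z fun _ => μ) {A : Set Ω}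
    (hA : MeasurableSet[M] A) {B : Set S} (hB : MeasurableSet B) :
    P (A ∩ Z ⁻¹' B) = μ B * P A := by
  rw [h.2.2 A hA B hB, setLIntegral_const]

lemma law_eq_of_const [IsProbabilityMeasure P] {μ : Measure S} (h : IsRCD P M Z fun _ => μ)
    (hZ : Measurable Z) : law P Z = μ := by
  ext B hB
  rw [law, Measure.map_apply hZ hB]
  simpa using h.measure_inter_of_const .univ hB

lemma indep_of_const [IsProbabilityMeasure P] {μ : Measure S} (h : IsRCD P M Z fun _ => μ) :
    Indep (MeasurableSpace.comap Z inferInstance) M P := by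
  rw [Indep_iff]
  rintro _ A ⟨B, hB, rfl⟩ hA
  have h_preimage : P (Z ⁻¹' B) = μ B := by
    simpa using h.measure_inter_of_const .univ hB
  rw [inter_comm, h.measure_inter_of_const hA hB, h_preimage]

end IsRCD

/-- Conditioning on `M` is conditioning on the identity map from `Ω` to `(Ω, M)`. -/
lemma isRCD_iff_hasCondDistrib {Ω S : Type*} {M mΩ : MeasurableSpace Ω} [MeasurableSpace S]
    {P : Measure Ω} [IsFiniteMeasure P] (hM : M ≤ mΩ) {Z : Ω → S}
    (hZ : Measurable Z) (κ : Kernel[M] Ω S) [hκ : @IsMarkovKernel Ω S M _ κ] :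
    IsRCD P M Z κ ↔ @HasCondDistrib Ω Ω S mΩ M _ Z id κ P := by
  have h_id : @AEMeasurable Ω Ω M mΩ id P :=
    @Measurable.aemeasurable Ω Ω mΩ M id P (measurable_id'' hM)
  rw [@hasCondDistrib_iff_measure_inter Ω Ω S mΩ M _ P Z id κ _ _ hZ.aemeasurable h_id]
  exact ⟨fun h => h.2.2, fun h => ⟨@IsMarkovKernel.isProbabilityMeasure Ω S M _ κ hκ,
    fun B hB => @Kernel.measurable_coe Ω S M _ κ B hB, h⟩⟩

theorem berbee_coupling_general
    {S : Type*} [MeasurableSpace S] [StandardBorelSpace S]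
    {Ω : Type*} {mΩ : MeasurableSpace Ω} (P : Measure Ω) [IsProbabilityMeasure P]
    (X : Ω → S) (hX : Measurable X)
    (U : Ω → ℝ) (hUmeas : Measurable U)
    (hUunif : P.map U = volume.restrict (Icc (0 : ℝ) 1))
    (M : MeasurableSpace Ω) (hM : M ≤ mΩ)
    (hUindep : Indep (MeasurableSpace.comap U inferInstance)
      (MeasurableSpace.comap X inferInstance ⊔ M) P)
    (κX : Ω → Measure S) (hκX : IsRCD P M X κX)
    (η : Ω → Measure S) (hη : ∀ ω, IsProbabilityMeasure (η ω)) (hηM : Measurable[M] η) :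
    ∃ Xstar : Ω → S,
      Measurable[MeasurableSpace.comap U inferInstance ⊔
        MeasurableSpace.comap X inferInstance ⊔ M] Xstar ∧
      IsRCD P M Xstar η ∧
      P {ω | X ω ≠ Xstar ω} = (∫⁻ ω, tvDist (κX ω) (η ω) ∂P) / 2 := by
  let κK : Kernel[M] Ω S := @Kernel.mk Ω S M _ κX hκX.measurable
  let ηK : Kernel[M] Ω S := @Kernel.mk Ω S M _ η hηM
  have : @IsMarkovKernel Ω S M _ κK := @IsMarkovKernel.mk Ω S M _ κK hκX.1
  have : @IsMarkovKernel Ω S M _ ηK := @IsMarkovKernel.mk Ω S M _ ηK hη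
  have h_pair : Measurable[MeasurableSpace.comap X inferInstance ⊔ M, M.prod inferInstance]
      fun ω => (id ω, X ω) :=
    @Measurable.prodMk _ (_) _ _ M _ _ _ (measurable_id'' le_sup_right)
      (measurable_iff_comap_le.2 le_sup_left)
  have h_indep : @IndepFun Ω (Ω × S) ℝ mΩ (M.prod inferInstance) _ (fun ω => (id ω, X ω)) U
      P := by
    rw [IndepFun_iff_Indep]
    exact indep_of_indep_of_le_left hUindep.symm h_pair.comap_le
  obtain ⟨G, hG, hGη, h_ne⟩ := @exists_maximal_coupling_of_hasCondDistrib Ω Ω S mΩ M _ _ P _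
    X id κK ηK _ _ ((isRCD_iff_hasCondDistrib hM hX κK).1 hκX) U
    ⟨hUmeas.aemeasurable, hUunif⟩ h_indep
  have h_meas : Measurable[MeasurableSpace.comap U inferInstance ⊔
      MeasurableSpace.comap X inferInstance ⊔ M] fun ω => G ((id ω, X ω), U ω) :=
    hG.comp (@Measurable.prodMk _ (_) _ _ (M.prod inferInstance) _ _ _
      (h_pair.mono (by rw [sup_assoc]; exact le_sup_right) le_rfl)
      (measurable_iff_comap_le.2 (by rw [sup_assoc]; exact le_sup_left)))
  have h_le := sup_le (sup_le hUmeas.comap_le hX.comap_le) hM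
  exact ⟨_, h_meas, (isRCD_iff_hasCondDistrib hM (h_meas.mono h_le le_rfl) ηK).2 hGη, h_ne⟩

/-- **Berbee's coupling**: if `Ω` is rich enough, there is a
`σ(U) ∨ σ(X) ∨ ℳ`-measurable random variable `X*`, independent of `ℳ` and with the same
law as `X`, such that `P(X ≠ X*) = ½ E[‖P_{X|ℳ} - P_X‖_v]`. -/
theorem berbee_coupling
    {S : Type*} [TopologicalSpace S] [PolishSpace S] [MeasurableSpace S] [BorelSpace S]
    {Ω : Type*} [mΩ : MeasurableSpace Ω] (P : Measure Ω) [IsProbabilityMeasure P]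
    (X : Ω → S) (hX : Measurable X)
    (U : Ω → ℝ) (hUmeas : Measurable U)
    (hUunif : P.map U = volume.restrict (Set.Icc (0:ℝ) 1))
    (M : MeasurableSpace Ω) (hM : M ≤ mΩ)
    (hUindep : Indep (MeasurableSpace.comap U inferInstance)
      (MeasurableSpace.comap X inferInstance ⊔ M) P)
    (κX : Ω → Measure S) (hκX : IsRCD P M X κX) :
    ∃ Xstar : Ω → S,
      Measurable[MeasurableSpace.comap U inferInstance ⊔
        MeasurableSpace.comap X inferInstance ⊔ M] Xstar ∧
      Indep (MeasurableSpace.comap Xstar inferInstance) M P ∧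
      law P Xstar = law P X ∧
      P {ω | X ω ≠ Xstar ω} = (∫⁻ ω, tvDist (κX ω) (law P X) ∂P) / 2 := by
  obtain ⟨Xstar, h_meas, h_rcd, h_ne⟩ := berbee_coupling_general P X hX U hUmeas hUunif M hM
    hUindep κX hκX (fun _ => law P X)
    (fun _ => Measure.isProbabilityMeasure_map hX.aemeasurable) (@measurable_const _ _ _ M _)
  have h_le := sup_le (sup_le hUmeas.comap_le hX.comap_le) hM
  exact ⟨Xstar, h_meas, h_rcd.indep_of_const, h_rcd.law_eq_of_const (h_meas.mono h_le le_rfl), h_ne⟩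

end
end
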